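/- arXiv:1602.06732 — 2 statements merged into one kernel-verified Lean document; each statement's English description precedes it below -/
import Mathlib

section
/- Let n ≥ 2 and 1 ≤ k ≤ n. Define polynomials π_1,…,π_n ∈ ℝ[x_1,…,x_n] by π_i = s_{2i} for 1 ≤ i ≤ ⌊n/2⌋, π_{⌊n/2⌋+1} = e_n = x_1⋯x_n, and π_i = s_{2i−2} for ⌊n/2⌋+1 < i ≤ n. Let f_1,…,f_m ∈ ℝ[x_1,…,x_n] be polynomials each belonging to the ℝ-subalgebra generated by π_1,…,π_k. If the real variety X = {x ∈ ℝ^n : f_1(x) = ⋯ = f_m(x) = 0} is nonempty, then X contains a point of H_k(D_n), i.e. there exists x ∈ X such that either x has exactly one zero coordinate and its nonzero coordinates take at most k−1 distinct absolute values, or x does not have exactly one zero coordinate and its nonzero coordinates take at most k distinct absolute values. -/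
open MvPolynomial

/-- The basic invariants `π₁, …, πₙ` of the reflection group `Dₙ` (equation (2.2)):
`πᵢ = s_{2i}` for `1 ≤ i ≤ ⌊n/2⌋`, `π_{⌊n/2⌋+1} = eₙ = x₁⋯xₙ`, and
`πᵢ = s_{2i-2}` for `⌊n/2⌋+1 < i ≤ n`. -/
noncomputable def basicInvariantDn (n i : ℕ) : MvPolynomial (Fin n) ℝ :=
  if i ≤ n / 2 then psum (Fin n) ℝ (2 * i)
  else if i = n / 2 + 1 then ∏ j, X j
  else psum (Fin n) ℝ (2 * i - 2)

/-- Membership in the stratum `H_k(Dₙ)` of the reflection arrangement of `Dₙ`: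
either `x` has exactly one zero coordinate and its nonzero coordinates take at most
`k-1` distinct absolute values, or `x` does not have exactly one zero coordinate
and its nonzero coordinates take at most `k` distinct absolute values. -/
def memStratumDn {n : ℕ} (k : ℕ) (x : Fin n → ℝ) : Prop :=
  ({i | x i = 0}.ncard = 1 ∧ ((fun i => |x i|) '' {i | x i ≠ 0}).ncard ≤ k - 1) ∨
  ({i | x i = 0}.ncard ≠ 1 ∧ ((fun i => |x i|) '' {i | x i ≠ 0}).ncard ≤ k)

section Helpers
open Filter Topology
lemma root_near (Q S R : Polynomial ℝ) (b η : ℝ) (hη : 0 < η) (hQ : Q = (Polynomial.X - Polynomial.C b) * S)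
    (hS : S.eval b ≠ 0) : ∀ᶠ δ in 𝓝 (0:ℝ), ∃ c, |c - b| < η ∧ (Q + Polynomial.C δ * R).eval c = 0 := by
  have h1 : ∀ᶠ u in 𝓝 b, 0 < S.eval u * S.eval b := by
    have : Tendsto (fun u => S.eval u * S.eval b) (𝓝 b) (𝓝 (S.eval b * S.eval b)) :=
      (S.continuous.tendsto b).mul tendsto_const_nhds
    exact this.eventually (lt_mem_nhds (mul_self_pos.2 hS))
  obtain ⟨ε, hε, h2⟩ := Metric.eventually_nhds_iff.1 h1
  set r := min ε η / 2 with hr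
  have hm : 0 < min ε η := lt_min hε hη
  have hr0 : 0 < r := by positivity
  have hrε : r < ε := by have := min_le_left ε η; linarith
  have hrη : r < η := by have := min_le_right ε η; linarith
  have hu := h2 (y := b - r) (by rw [Real.dist_eq, abs_lt]; constructor <;> linarith)
  have hv := h2 (y := b + r) (by rw [Real.dist_eq, abs_lt]; constructor <;> linarith)
  have hneg : Q.eval (b - r) * Q.eval (b + r) < 0 := by
    have h3 : 0 < S.eval (b - r) * S.eval (b + r) := by
      have h4 := mul_pos hu hv
      have h5 : 0 < S.eval b * S.eval b := mul_self_pos.2 hS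
      have h6 : 0 < (S.eval (b - r) * S.eval (b + r)) * (S.eval b * S.eval b) := by nlinarith
      exact pos_of_mul_pos_left h6 h5.le
    rw [hQ]; simp only [Polynomial.eval_mul, Polynomial.eval_sub, Polynomial.eval_X, Polynomial.eval_C]
    nlinarith [mul_pos (mul_pos hr0 hr0) h3]
  have h7 : ∀ᶠ δ in 𝓝 (0:ℝ), (Q + Polynomial.C δ * R).eval (b - r) * (Q + Polynomial.C δ * R).eval (b + r) < 0 := by
    have : Continuous (fun δ : ℝ => (Q + Polynomial.C δ * R).eval (b - r) * (Q + Polynomial.C δ * R).eval (b + r)) := by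
      simp only [Polynomial.eval_add, Polynomial.eval_mul, Polynomial.eval_C]
      fun_prop
    have h8 := this.tendsto 0
    simp only [Polynomial.C_0, zero_mul, add_zero] at h8
    exact h8.eventually (gt_mem_nhds hneg)
  filter_upwards [h7] with δ hδ
  set P := Q + Polynomial.C δ * R
  have hz : (0:ℝ) ∈ Set.uIcc (P.eval (b - r)) (P.eval (b + r)) := by
    rw [Set.mem_uIcc]
    rcases mul_neg_iff.1 hδ with h | h
    · right; exact ⟨h.2.le, h.1.le⟩
    · left; exact ⟨h.1.le, h.2.le⟩
  obtain ⟨c, hc, hc0⟩ := intermediate_value_uIcc (f := fun t => P.eval t) P.continuous.continuousOn hz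
  rw [Set.uIcc_of_le (by linarith)] at hc
  refine ⟨c, ?_, hc0⟩
  rw [abs_lt]; constructor <;> linarith [hc.1, hc.2]

lemma roots_perturb (N : ℕ) (b : Fin N → ℝ) (hb : Function.Injective b) (R : Polynomial ℝ)
    (hR : R.degree < N) :
    ∀ᶠ δ in 𝓝 (0:ℝ), ∃ b' : Fin N → ℝ,
      ∏ i, (Polynomial.X - Polynomial.C (b' i)) = ∏ i, (Polynomial.X - Polynomial.C (b i)) + Polynomial.C δ * R := by
  have hinj : ∀ᶠ b' in 𝓝 b, Function.Injective b' := by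
    have : ∀ᶠ b' in 𝓝 b, ∀ i j : Fin N, i ≠ j → b' i ≠ b' j := by
      refine eventually_all.2 fun i => eventually_all.2 fun j => ?_
      by_cases hij : i = j
      · simp [hij]
      · have hc : Continuous (fun b' : Fin N → ℝ => b' i - b' j) := by fun_prop
        have := (hc.tendsto b).eventually_ne (sub_ne_zero.2 (hb.ne hij))
        filter_upwards [this] with b' h _ h'
        exact h (sub_eq_zero.2 h')
    filter_upwards [this] with b' h i j hij
    by_contra hne
    exact h i j hne hij
  obtain ⟨η, hη, hinj⟩ := Metric.eventually_nhds_iff.1 hinj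
  set Q : Polynomial ℝ := ∏ i, (Polynomial.X - Polynomial.C (b i)) with hQ
  have hr : ∀ᶠ δ in 𝓝 (0:ℝ), ∀ i, ∃ c, |c - b i| < η ∧ (Q + Polynomial.C δ * R).eval c = 0 := by
    refine eventually_all.2 fun i => ?_
    refine root_near Q (∏ j ∈ Finset.univ.erase i, (Polynomial.X - Polynomial.C (b j))) R (b i) η hη ?_ ?_
    · exact (Finset.mul_prod_erase _ (fun i => Polynomial.X - Polynomial.C (b i)) (Finset.mem_univ i)).symm
    · rw [Polynomial.eval_prod, Finset.prod_ne_zero_iff]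
      intro j hj
      simp only [Polynomial.eval_sub, Polynomial.eval_X, Polynomial.eval_C]
      exact sub_ne_zero.2 (hb.ne (Finset.ne_of_mem_erase hj).symm)
  filter_upwards [hr] with δ hδ
  choose c hc hc0 using hδ
  have hci : Function.Injective c := by
    apply hinj
    rw [dist_pi_lt_iff hη]
    intro i; rw [Real.dist_eq]; exact hc i
  refine ⟨c, ?_⟩
  have hd : ∀ b : Fin N → ℝ, (∏ i, (Polynomial.X - Polynomial.C (b i)) : Polynomial ℝ).degree = N := by
    intro b
    rw [Polynomial.degree_prod]; simp
  have hmon : ∀ b : Fin N → ℝ, (∏ i, (Polynomial.X - Polynomial.C (b i)) : Polynomial ℝ).Monic := 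
    fun b => Polynomial.monic_prod_of_monic _ _ fun i _ => Polynomial.monic_X_sub_C _
  refine Polynomial.eq_of_degree_sub_lt_of_eval_index_eq Finset.univ (v := c) hci.injOn ?_ ?_
  · rw [← sub_sub]
    refine (Polynomial.degree_sub_le _ _).trans_lt (max_lt ?_ ?_)
    · rw [Finset.card_fin]
      refine (Polynomial.degree_sub_lt_left (by rw [hd, hd]) (hmon _).ne_zero ?_).trans_eq (hd _)
      rw [(hmon _).leadingCoeff, (hmon _).leadingCoeff]
    · rw [Finset.card_fin]
      refine lt_of_le_of_lt ?_ hR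
      rw [← Polynomial.smul_eq_C_mul]; exact Polynomial.degree_smul_le _ _
  · intro i _
    rw [hc0 i, Polynomial.eval_prod]
    exact Finset.prod_eq_zero (Finset.mem_univ i) (by simp)

lemma perturb (N d : ℕ) (hd : 1 ≤ d) (hdN : d ≤ N) (b : Fin N → ℝ) (hb : Function.Injective b)
    (hb0 : ∀ i, 0 ≤ b i) :
    ∃ b' : Fin N → ℝ, (∀ i, 0 ≤ b' i) ∧ (∀ j, 1 ≤ j → j < d → ∑ i, b' i ^ j = ∑ i, b i ^ j) ∧
      0 < (-1) ^ (d + 1) * (∑ i, b' i ^ d - ∑ i, b i ^ d) ∧ (d < N → ∏ i, b' i = ∏ i, b i) := by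
  have h := roots_perturb N b hb (Polynomial.C ((-1) ^ d) * Polynomial.X ^ (N - d))
    ((Polynomial.degree_C_mul_X_pow_le _ _).trans_lt (by exact_mod_cast (by omega : N - d < N)))
  obtain ⟨δ, ⟨b', hb'⟩, hδ⟩ := ((h.filter_mono nhdsWithin_le_nhds).and
    (self_mem_nhdsWithin : ∀ᶠ δ in 𝓝[>] (0:ℝ), δ ∈ Set.Ioi 0)).exists
  have hδ : 0 < δ := hδ
  have hesymm : ∀ (b : Fin N → ℝ) (m : ℕ), m ≤ N →
      (∏ i, (Polynomial.X - Polynomial.C (b i))).coeff (N - m) = 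
        (-1) ^ m * MvPolynomial.aeval b (MvPolynomial.esymm (Fin N) ℝ m) := by
    intro b m hm
    rw [MvPolynomial.aeval_esymm_eq_multiset_esymm]
    have := Multiset.prod_X_sub_C_coeff (Finset.univ.val.map b) (k := N - m) (by simp)
    simp only [Multiset.map_map, Multiset.card_map, Finset.card_val, Finset.card_fin] at this
    rw [show N - (N - m) = m by omega] at this
    exact this
  have he : ∀ m, m ≤ N → (-1) ^ m * MvPolynomial.aeval b' (MvPolynomial.esymm (Fin N) ℝ m) =
      (-1) ^ m * MvPolynomial.aeval b (MvPolynomial.esymm (Fin N) ℝ m) + if m = d then δ * (-1) ^ d else 0 := by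
    intro m hm
    rw [← hesymm _ _ hm, ← hesymm _ _ hm, hb', Polynomial.coeff_add, Polynomial.coeff_C_mul,
      Polynomial.coeff_C_mul, Polynomial.coeff_X_pow]
    by_cases hmd : m = d
    · simp [hmd]
    · rw [if_neg hmd, if_neg (by omega)]; simp
  have he1 : ∀ m, m < d → MvPolynomial.aeval b' (MvPolynomial.esymm (Fin N) ℝ m) =
      MvPolynomial.aeval b (MvPolynomial.esymm (Fin N) ℝ m) := by
    intro m hm
    have := he m (by omega)
    rw [if_neg (by omega), add_zero] at this
    exact mul_left_cancel₀ (pow_ne_zero _ (by norm_num)) this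
  have he2 : MvPolynomial.aeval b' (MvPolynomial.esymm (Fin N) ℝ d) =
      MvPolynomial.aeval b (MvPolynomial.esymm (Fin N) ℝ d) + δ := by
    have := he d hdN
    rw [if_pos rfl] at this
    refine mul_left_cancel₀ (a := (-1:ℝ) ^ d) (pow_ne_zero _ (by norm_num)) ?_
    rw [this]; ring
  have hnewton : ∀ (b : Fin N → ℝ) (j : ℕ), 0 < j → ∑ i, b i ^ j =
      (-1) ^ (j + 1) * j * MvPolynomial.aeval b (MvPolynomial.esymm (Fin N) ℝ j) - 
      ∑ a ∈ Finset.HasAntidiagonal.antidiagonal j with a.1 ∈ Set.Ioo 0 j, (-1) ^ a.1 *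
        MvPolynomial.aeval b (MvPolynomial.esymm (Fin N) ℝ a.1) * ∑ i, b i ^ a.2 := by
    intro b j hj
    have := congrArg (MvPolynomial.aeval b) (MvPolynomial.psum_eq_mul_esymm_sub_sum (Fin N) ℝ j hj)
    simpa [MvPolynomial.psum] using this
  have hp : ∀ j, 1 ≤ j → j < d → ∑ i, b' i ^ j = ∑ i, b i ^ j := by
    intro j
    induction j using Nat.strong_induction_on with
    | _ j ih =>
      intro h1 h2
      rw [hnewton b' j h1, hnewton b j h1, he1 j h2]
      congr 1
      refine Finset.sum_congr rfl fun a ha => ?_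
      simp only [Finset.mem_filter, Finset.HasAntidiagonal.mem_antidiagonal, Set.mem_Ioo] at ha
      rw [he1 a.1 (by omega), ih a.2 (by omega) (by omega) (by omega)]
  refine ⟨b', ?_, hp, ?_, ?_⟩
  · intro i
    by_contra hneg
    push Not at hneg
    have h0 := congrArg (Polynomial.eval (b' i)) hb'
    rw [Polynomial.eval_prod, Finset.prod_eq_zero (Finset.mem_univ i) (by simp)] at h0
    simp only [Polynomial.eval_add, Polynomial.eval_mul, Polynomial.eval_prod, Polynomial.eval_sub, Polynomial.eval_pow,
      Polynomial.eval_X, Polynomial.eval_C] at h0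
    set c := b' i
    have h1 : ∏ j, (c - b j) = (-1) ^ N * ∏ j, (b j - c) := by
      have h1' : ∏ j, (c - b j) = ∏ j, (-1 * (b j - c)) :=
        Finset.prod_congr rfl fun j _ => by ring
      rw [h1', Finset.prod_mul_distrib, Finset.prod_const, Finset.card_fin]
    have h2 : (-1:ℝ) ^ d * c ^ (N - d) = (-1) ^ N * (-c) ^ (N - d) := by
      conv_rhs => rw [neg_pow c, show N = d + (N - d) by omega, pow_add, Nat.add_sub_cancel_left]
      have : (-1:ℝ) ^ (N - d) * (-1) ^ (N - d) = 1 := by rw [← mul_pow]; simp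
      linear_combination (-(-1:ℝ) ^ d * c ^ (N - d)) * this
    have h3 : 0 < ∏ j, (b j - c) := Finset.prod_pos fun j _ => by linarith [hb0 j]
    have h4 : 0 < (-c) ^ (N - d) := pow_pos (by linarith) _
    rw [h1, h2] at h0
    have h5 : (-1:ℝ) ^ N * (∏ j, (b j - c) + δ * (-c) ^ (N - d)) = 0 := by linear_combination -h0
    rcases mul_eq_zero.1 h5 with h | h
    · exact (pow_ne_zero _ (by norm_num) : (-1:ℝ) ^ N ≠ 0) h
    · have := mul_pos hδ h4
      linarith
  · rw [hnewton b' d hd, hnewton b d hd, he2]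
    have : ∑ a ∈ Finset.HasAntidiagonal.antidiagonal d with a.1 ∈ Set.Ioo 0 d, (-1) ^ a.1 *
        MvPolynomial.aeval b' (MvPolynomial.esymm (Fin N) ℝ a.1) * ∑ i, b' i ^ a.2 =
        ∑ a ∈ Finset.HasAntidiagonal.antidiagonal d with a.1 ∈ Set.Ioo 0 d, (-1) ^ a.1 *
        MvPolynomial.aeval b (MvPolynomial.esymm (Fin N) ℝ a.1) * ∑ i, b i ^ a.2 := by
      refine Finset.sum_congr rfl fun a ha => ?_
      simp only [Finset.mem_filter, Finset.HasAntidiagonal.mem_antidiagonal, Set.mem_Ioo] at ha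
      rw [he1 a.1 (by omega), hp a.2 (by omega) (by omega)]
    rw [this]
    have h1 : (-1:ℝ) ^ (d + 1) * (-1) ^ (d + 1) = 1 := by rw [← mul_pow]; simp
    have h2 : (0:ℝ) < d := by exact_mod_cast hd
    have h3 := mul_pos h2 hδ
    refine lt_of_lt_of_eq h3 ?_
    linear_combination (-(d:ℝ) * δ) * h1
  · intro hlt
    have h0 := congrArg (Polynomial.eval 0) hb'
    simp only [Polynomial.eval_add, Polynomial.eval_mul, Polynomial.eval_prod, Polynomial.eval_sub, Polynomial.eval_pow,
      Polynomial.eval_X, Polynomial.eval_C, zero_sub, zero_pow (by omega : N - d ≠ 0), mul_zero, add_zero,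
      Finset.prod_neg] at h0
    exact mul_left_cancel₀ (pow_ne_zero _ (by norm_num)) h0

lemma extremal {ι : Type*} [Fintype ι] (N d : ℕ) (hd : 2 ≤ d) (hdN : d ≤ N) (y0 : ι → ℝ) (hy0 : ∀ i, 0 ≤ y0 i) :
    ∃ y : ι → ℝ, (∀ i, 0 ≤ y i) ∧ (∀ j, 1 ≤ j → j < d → ∑ i, y i ^ j = ∑ i, y0 i ^ j) ∧
      (d < N → ∏ i, y i = ∏ i, y0 i) ∧ (Set.range y).ncard < N := by
  classical
  set K : Set (ι → ℝ) := {y | (∀ i, 0 ≤ y i) ∧ (∀ j, 1 ≤ j → j < d → ∑ i, y i ^ j = ∑ i, y0 i ^ j) ∧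
      (d < N → ∏ i, y i = ∏ i, y0 i)} with hK
  have hcl : IsClosed K := by
    refine IsClosed.and ?_ (IsClosed.and ?_ ?_)
    · simp only [Set.ofPred_forall]
      exact isClosed_iInter fun i => isClosed_le (by fun_prop) (by fun_prop)
    · simp only [Set.ofPred_forall]
      exact isClosed_iInter fun j => isClosed_iInter fun _ => isClosed_iInter fun _ =>
        isClosed_eq (by fun_prop) (by fun_prop)
    · simp only [Set.ofPred_forall]
      exact isClosed_iInter fun _ => isClosed_eq (by fun_prop) (by fun_prop)
  have hcpt : IsCompact K := by
    refine IsCompact.of_isClosed_subset (isCompact_univ_pi fun _ : ι => 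
      isCompact_Icc (a := (0:ℝ)) (b := ∑ i, y0 i)) hcl ?_
    rintro y ⟨h1, h2, -⟩ i -
    refine ⟨h1 i, ?_⟩
    have := h2 1 le_rfl (by omega)
    simp only [pow_one] at this
    rw [← this]
    exact Finset.single_le_sum (fun i _ => h1 i) (Finset.mem_univ i)
  obtain ⟨y, hyK, hmax⟩ := hcpt.exists_isMaxOn ⟨y0, hy0, fun _ _ _ => rfl, fun _ => rfl⟩
    (f := fun y => (-1:ℝ) ^ (d + 1) * ∑ i, y i ^ d) (by fun_prop)
  refine ⟨y, hyK.1, hyK.2.1, hyK.2.2, ?_⟩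
  by_contra hN
  push Not at hN
  obtain ⟨g, hg⟩ : ∃ g : Fin N → ι, Function.Injective (y ∘ g) := by
    have hfin : (Set.range y).Finite := Set.finite_range y
    have : Fintype (Set.range y) := hfin.fintype
    have hc : Fintype.card (Fin N) ≤ Fintype.card (Set.range y) := by
      rw [Fintype.card_fin, ← Nat.card_eq_fintype_card]; exact hN
    obtain ⟨e⟩ := Function.Embedding.nonempty_of_card_le hc
    choose g hg using fun a => (e a).2
    refine ⟨g, fun a b hab => e.injective (Subtype.ext ?_)⟩
    rw [← hg a, ← hg b]; exact hab
  have hgi : Function.Injective g := hg.of_comp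
  obtain ⟨b', hb0, hbp, hbd, hbe⟩ := perturb N d (by omega) hdN (y ∘ g) hg (fun i => hyK.1 _)
  set y' : ι → ℝ := Function.extend g b' y with hy'
  have hin : ∀ a, y' (g a) = b' a := fun a => hgi.extend_apply _ _ _
  have hout : ∀ i ∉ Finset.univ.image g, y' i = y i := fun i hi =>
    Function.extend_apply' _ _ _ (by simpa using hi)
  have hsum : ∀ j, ∑ i, y' i ^ j = ∑ i, y i ^ j + (∑ a, b' a ^ j - ∑ a, (y ∘ g) a ^ j) := by
    intro j
    rw [← Finset.sum_add_sum_compl (Finset.univ.image g), ← Finset.sum_add_sum_compl (Finset.univ.image g) (fun i => y i ^ j),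
      Finset.sum_image hgi.injOn, Finset.sum_image hgi.injOn,
      Finset.sum_congr rfl (g := fun i => y i ^ j) (s₁ := (Finset.univ.image g)ᶜ) fun i hi => by rw [hout i (Finset.mem_compl.1 hi)]]
    simp only [hin, Function.comp]
    ring
  have hprod : d < N → ∏ i, y' i = ∏ i, y i := by
    intro h
    rw [← Finset.prod_mul_prod_compl (Finset.univ.image g), ← Finset.prod_mul_prod_compl (Finset.univ.image g) y,
      Finset.prod_image hgi.injOn, Finset.prod_image hgi.injOn,
      Finset.prod_congr rfl (g := y) (s₁ := (Finset.univ.image g)ᶜ) fun i hi => hout i (Finset.mem_compl.1 hi)]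
    simp only [hin]
    rw [hbe h]; rfl
  have hy'K : y' ∈ K := by
    refine ⟨fun i => ?_, fun j h1 h2 => ?_, fun h => (hprod h).trans (hyK.2.2 h)⟩
    · by_cases hi : i ∈ Finset.univ.image g
      · obtain ⟨a, -, rfl⟩ := Finset.mem_image.1 hi
        rw [hin]; exact hb0 a
      · rw [hout i hi]; exact hyK.1 i
    · rw [hsum, hbp j h1 h2, sub_self, add_zero]; exact hyK.2.1 j h1 h2
  have := hmax hy'K
  simp only [Set.mem_ofPred_eq, hsum] at this
  linarith

lemma ncard_abs_le {n : ℕ} (x y : Fin n → ℝ) (hxy : ∀ i, x i ^ 2 = y i) (k : ℕ)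
    (h : (Set.range y).ncard ≤ k) : ((fun i => |x i|) '' {i | x i ≠ 0}).ncard ≤ k := by
  have hsub : ((fun i => |x i|) '' {i | x i ≠ 0}) ⊆ Real.sqrt '' (Set.range y) := by
    rintro _ ⟨i, -, rfl⟩
    exact ⟨y i, ⟨i, rfl⟩, by rw [← hxy, Real.sqrt_sq_eq_abs]⟩
  exact (Set.ncard_le_ncard hsub ((Set.finite_range y).image _)).trans
    ((Set.ncard_image_le (Set.finite_range y)).trans h)

lemma ncard_abs_lt {n : ℕ} (x y : Fin n → ℝ) (hxy : ∀ i, x i ^ 2 = y i) (k : ℕ)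
    (h : (Set.range y).ncard ≤ k) (h0 : ∃ i, x i = 0) :
    ((fun i => |x i|) '' {i | x i ≠ 0}).ncard ≤ k - 1 := by
  obtain ⟨i0, hi0⟩ := h0
  have hsub : insert 0 ((fun i => |x i|) '' {i | x i ≠ 0}) ⊆ Real.sqrt '' (Set.range y) := by
    rintro _ (rfl | ⟨i, -, rfl⟩)
    · exact ⟨y i0, ⟨i0, rfl⟩, by rw [← hxy, hi0]; simp⟩
    · exact ⟨y i, ⟨i, rfl⟩, by rw [← hxy, Real.sqrt_sq_eq_abs]⟩
  have h1 := (Set.ncard_le_ncard hsub ((Set.finite_range y).image _)).trans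
    ((Set.ncard_image_le (Set.finite_range y)).trans h)
  rw [Set.ncard_insert_of_notMem (by
    rintro ⟨i, hi, h⟩
    exact hi (abs_eq_zero.1 h)) (Set.toFinite _)] at h1
  omega

end Helpers

/-- Theorem 1.2 for type `Dₙ`: a nonempty real variety defined by polynomials in the
first `k` basic invariants of `Dₙ` meets the stratum `H_k(Dₙ)`. -/
theorem degree_principle_Dn
    (n : ℕ) (hn : 2 ≤ n) (k : ℕ) (hk1 : 1 ≤ k) (hkn : k ≤ n)
    (m : ℕ) (f : Fin m → MvPolynomial (Fin n) ℝ)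
    (hf : ∀ j, f j ∈ Algebra.adjoin ℝ
      {p : MvPolynomial (Fin n) ℝ | ∃ i, 1 ≤ i ∧ i ≤ k ∧ p = basicInvariantDn n i})
    (hX : ∃ x : Fin n → ℝ, ∀ j, eval x (f j) = 0) :
    ∃ x : Fin n → ℝ, (∀ j, eval x (f j) = 0) ∧ memStratumDn k x := by
    classical
  obtain ⟨x0, hx0⟩ := hX
  -- it suffices to keep the values of the first k invariants
  suffices H : ∃ x : Fin n → ℝ, (∀ i, 1 ≤ i → i ≤ k →
      eval x (basicInvariantDn n i) = eval x0 (basicInvariantDn n i)) ∧ memStratumDn k x by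
    obtain ⟨x, hx, hs⟩ := H
    refine ⟨x, fun j => ?_, hs⟩
    rw [← hx0 j]
    have key : ∀ p ∈ Algebra.adjoin ℝ
        {p : MvPolynomial (Fin n) ℝ | ∃ i, 1 ≤ i ∧ i ≤ k ∧ p = basicInvariantDn n i},
        eval x p = eval x0 p := by
      intro p hp
      induction hp using Algebra.adjoin_induction with
      | mem p hp =>
        obtain ⟨i, h1, h2, rfl⟩ := hp
        exact hx i h1 h2
      | algebraMap r => simp [MvPolynomial.algebraMap_eq]
      | add p q _ _ hp hq => rw [map_add, map_add, hp, hq]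
      | mul p q _ _ hp hq => rw [map_mul, map_mul, hp, hq]
    exact key _ (hf j)
  have hps : ∀ (x y : Fin n → ℝ), (∀ i, x i ^ 2 = y i) → ∀ j,
      eval x (psum (Fin n) ℝ (2 * j)) = ∑ i, y i ^ j := by
    intro x y hxy j
    simp only [psum, map_sum, map_pow, eval_X, pow_mul, hxy]
  have hBC : n / 2 + 1 ≤ k → ∀ x y : Fin n → ℝ, (∀ i, x i ^ 2 = y i) →
      (∀ j, 1 ≤ j → j < k → ∑ i, y i ^ j = ∑ i, (x0 i ^ 2) ^ j) → ∏ i, x i = ∏ i, x0 i →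
      ∀ i, 1 ≤ i → i ≤ k →
      eval x (basicInvariantDn n i) = eval x0 (basicInvariantDn n i) := by
    intro hk x y hxy hp hprod i h1 h2
    unfold basicInvariantDn
    split_ifs with h3 h4
    · rw [hps x y hxy, hps x0 _ (fun _ => rfl), hp i h1 (by omega)]
    · simpa [map_prod] using hprod
    · rw [show 2 * i - 2 = 2 * (i - 1) by omega, hps x y hxy, hps x0 _ (fun _ => rfl),
        hp (i - 1) (by omega) (by omega)]
  by_cases hk : k ≤ n / 2
  · obtain ⟨y, hy0, hp, -, hc⟩ := extremal (k + 1) (k + 1) (by omega) le_rfl (fun i => x0 i ^ 2)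
      (fun i => sq_nonneg _)
    have hxy : ∀ i, Real.sqrt (y i) ^ 2 = y i := fun i => Real.sq_sqrt (hy0 i)
    refine ⟨fun i => Real.sqrt (y i), fun i h1 h2 => ?_, ?_⟩
    · unfold basicInvariantDn
      rw [if_pos (by omega), hps _ y hxy, hps x0 _ (fun _ => rfl), hp i h1 (by omega)]
    · by_cases hz : {i | Real.sqrt (y i) = 0}.ncard = 1
      · refine Or.inl ⟨hz, ncard_abs_lt _ y hxy k (by omega) ?_⟩
        obtain ⟨a, ha⟩ := Set.ncard_eq_one.1 hz
        exact ⟨a, (ha ▸ Set.mem_singleton a : a ∈ {i | Real.sqrt (y i) = 0})⟩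
      · exact Or.inr ⟨hz, ncard_abs_le _ y hxy k (by omega)⟩
  · by_cases he : ∏ i, x0 i = 0
    · obtain ⟨i0, -, hi0⟩ := Finset.prod_eq_zero_iff.1 he
      obtain ⟨y, hy0, hp, -, hc⟩ := extremal (ι := {i : Fin n // i ≠ i0}) k k (by omega) le_rfl
        (fun i => x0 i ^ 2) (fun i => sq_nonneg _)
      set x : Fin n → ℝ := fun i => if h : i ≠ i0 then Real.sqrt (y ⟨i, h⟩) else 0 with hx
      have hsplit : ∀ (z : Fin n → ℝ) (j : ℕ), 1 ≤ j → z i0 = 0 →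
          ∑ i, z i ^ j = ∑ i : {i : Fin n // i ≠ i0}, z i ^ j := by
        intro z j hj hz
        rw [← Finset.sum_subtype (Finset.univ.erase i0) (by simp) (fun i => z i ^ j)]
        rw [← Finset.add_sum_erase _ _ (Finset.mem_univ i0), hz, zero_pow (by omega), zero_add]
      have hxi0 : x i0 = 0 := by simp [hx]
      have hxi : ∀ i : {i : Fin n // i ≠ i0}, x i ^ 2 = y i := by
        intro i
        simp only [hx, dif_pos i.2]
        exact Real.sq_sqrt (hy0 i)
      have hle : ((fun i => |x i|) '' {i | x i ≠ 0}).ncard ≤ k - 1 := by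
        have hsub : ((fun i => |x i|) '' {i | x i ≠ 0}) ⊆ Real.sqrt '' (Set.range y) := by
          rintro _ ⟨i, hi, rfl⟩
          have hne : i ≠ i0 := fun h => hi (h ▸ hxi0)
          refine ⟨y ⟨i, hne⟩, ⟨_, rfl⟩, ?_⟩
          rw [← hxi, Real.sqrt_sq_eq_abs]
        have := (Set.ncard_le_ncard hsub ((Set.finite_range y).image _)).trans
          (Set.ncard_image_le (Set.finite_range y))
        omega
      refine ⟨x, hBC (by omega) x (fun i => x i ^ 2) (fun _ => rfl) ?_ ?_, ?_⟩
      · intro j h1 h2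
        rw [hsplit (fun i => x i ^ 2) j h1 (by simp [hxi0]), hsplit (fun i => x0 i ^ 2) j h1 (by simp [hi0]),
          ← hp j h1 h2]
        exact Finset.sum_congr rfl fun i _ => by rw [hxi]
      · rw [he]; exact Finset.prod_eq_zero (Finset.mem_univ i0) hxi0
      · by_cases hz : {i | x i = 0}.ncard = 1
        · exact Or.inl ⟨hz, hle⟩
        · exact Or.inr ⟨hz, by omega⟩
    · obtain ⟨y, hy0, hp, hpr, hc⟩ := extremal (k + 1) k (by omega) (by omega) (fun i => x0 i ^ 2)
        (fun i => sq_nonneg _)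
      have hpr := hpr (by omega)
      have hne : ∀ i, x0 i ≠ 0 := fun i => Finset.prod_ne_zero_iff.1 he i (Finset.mem_univ i)
      set x : Fin n → ℝ := fun i => x0 i / |x0 i| * Real.sqrt (y i) with hx
      have hxy : ∀ i, x i ^ 2 = y i := by
        intro i
        simp only [hx]
        rw [mul_pow, Real.sq_sqrt (hy0 i), div_pow, sq_abs, div_self (pow_ne_zero _ (hne i)), one_mul]
      have hprod : ∏ i, x i = ∏ i, x0 i := by
        simp only [hx]
        rw [Finset.prod_mul_distrib, Finset.prod_div_distrib, ← Finset.abs_prod,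
          ← Real.sqrt_prod _ (fun i _ => hy0 i), hpr, Finset.prod_pow, Real.sqrt_sq_eq_abs,
          div_mul_cancel₀ _ (abs_ne_zero.2 he)]
      refine ⟨x, hBC (by omega) x y hxy hp hprod, Or.inr ⟨?_, ncard_abs_le x y hxy k (by omega)⟩⟩
      have : {i | x i = 0} = ∅ := by
        refine Set.eq_empty_iff_forall_notMem.2 fun i hi => ?_
        exact he (hprod ▸ Finset.prod_eq_zero (Finset.mem_univ i) hi)
      rw [this]; simp
end

section
/- Let n ≥ 2 and let P be a polynomial function on the n×n real matrices (i.e. P is the evaluation of a polynomial in the n² matrix entries) such that P(g A g⁻¹) = P(A) for every invertible real matrix g with det g = 1 and every real matrix A with trace A = 0. Then there exists a polynomial F ∈ ℝ[y_2,…,y_n] such that P(A) = F(tr(A²), tr(A³), …, tr(Aⁿ)) for every real n×n matrix A with trace A = 0. -/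
open MvPolynomial Matrix

lemma det_aeval_eq {n : ℕ} (A : Matrix (Fin n) (Fin n) ℂ) (q : Polynomial ℂ) :
    (Polynomial.aeval A q).det = (A.charpoly.roots.map (fun z => q.eval z)).prod := by
  have hs := IsAlgClosed.splits A.charpoly
  have hcard : A.charpoly.roots.card = n := by
    rw [← hs.natDegree_eq_card_roots, charpoly_natDegree_eq_dim, Fintype.card_fin]
  have h1 : ∀ m : ℂ, (A - algebraMap ℂ _ m).det
      = (A.charpoly.roots.map (fun z => z - m)).prod := by
    intro m
    have h := eval_charpoly A m
    rw [hs.eval_eq_prod_roots_of_monic A.charpoly_monic] at h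
    have h2 : A - algebraMap ℂ _ m = - (Matrix.scalar (Fin n) m - A) := by
      rw [neg_sub]; rfl
    rw [h2, det_neg, ← h, Fintype.card_fin]
    clear h2 h
    have h4 : (-1 : ℂ) ^ n = (-1) ^ A.charpoly.roots.card := by rw [hcard]
    rw [h4, ← Multiset.card_map (fun z => m - z), ← Multiset.prod_map_neg, Multiset.map_map]
    simp
  rw [(IsAlgClosed.splits q).eq_prod_roots]
  generalize q.roots = t
  generalize q.leadingCoeff = a
  rw [map_mul, det_mul]
  simp only [Polynomial.eval_mul, Multiset.prod_map_mul]
  congr 1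
  · simp [hcard, Matrix.algebraMap_eq_diagonal]
  · induction t using Multiset.induction_on with
    | empty => simp
    | cons m t ih =>
      simp only [Multiset.map_cons, Multiset.prod_cons, map_mul, det_mul, ih, Polynomial.eval_mul,
        Multiset.prod_map_mul]
      congr 1
      simpa using h1 m

lemma trace_pow_eq {n : ℕ} (A : Matrix (Fin n) (Fin n) ℂ) (k : ℕ) :
    (A ^ k).trace = (A.charpoly.roots.map (fun z => z ^ k)).sum := by
  have h : (A ^ k).charpoly = ((A.charpoly.roots.map (fun z => z ^ k)).map
      (fun z => Polynomial.X - Polynomial.C z)).prod := by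
    apply Polynomial.funext
    intro x
    have := det_aeval_eq A (Polynomial.C x - Polynomial.X ^ k)
    simp only [map_sub, map_pow, Polynomial.aeval_X, Polynomial.aeval_C] at this
    rw [eval_charpoly]
    refine Eq.trans this ?_
    simp [Polynomial.eval_multiset_prod, Multiset.map_map]
  rw [trace_eq_sum_roots_charpoly, h, Polynomial.roots_multiset_prod_X_sub_C]

noncomputable def ee {n : ℕ} (A : Matrix (Fin n) (Fin n) ℝ) (k : ℕ) : ℝ :=
  (-1) ^ k * A.charpoly.coeff (n - k)

lemma newton_trace {n : ℕ} (A : Matrix (Fin n) (Fin n) ℝ) (k : ℕ) (hk : k ≤ n) :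
    (k : ℝ) * ee A k = (-1) ^ (k + 1) *
      ∑ a ∈ Finset.HasAntidiagonal.antidiagonal k with a.1 < k, (-1) ^ a.1 * ee A a.1 * (A ^ a.2).trace := by
  apply Complex.ofReal_injective
  set B : Matrix (Fin n) (Fin n) ℂ := A.map Complex.ofRealHom with hB
  set s := B.charpoly.roots with hsdef
  have hs := IsAlgClosed.splits B.charpoly
  have hnd : B.charpoly.natDegree = n := by
    rw [charpoly_natDegree_eq_dim, Fintype.card_fin]
  have he : ∀ j, j ≤ n → ((ee A j : ℝ) : ℂ) = aeval (fun x : s => x.1) (esymm s ℂ j) := by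
    intro j hj
    rw [aeval_esymm_eq_multiset_esymm, Multiset.map_univ_coe]
    have h := Polynomial.coeff_eq_esymm_roots_of_card
      (Polynomial.splits_iff_card_roots.1 hs) (k := n - j) (by omega)
    rw [B.charpoly_monic.leadingCoeff, hnd, hB, charpoly_map, Polynomial.coeff_map] at h
    have h3 : n - (n - j) = j := by omega
    rw [h3, ← charpoly_map, ← hB, ← hsdef] at h
    simp only [Complex.ofRealHom_eq_coe] at h
    simp only [ee, Complex.ofReal_mul, h]
    push_cast
    rw [one_mul, ← mul_assoc, ← mul_pow]; simp
  have hp : ∀ j, (((A ^ j).trace : ℝ) : ℂ) = aeval (fun x : s => x.1) (psum s ℂ j) := by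
    intro j
    have : (((A ^ j).trace : ℝ) : ℂ) = (B ^ j).trace := by
      rw [hB, ← Matrix.map_pow]
      simp [Matrix.trace]
    rw [this, trace_pow_eq, ← hsdef]
    simp only [psum, map_sum, map_pow, aeval_X]
    conv_lhs => rw [← Multiset.map_univ_coe s, Multiset.map_map]
    rfl
  have := congrArg (aeval (fun x : s => x.1)) (mul_esymm_eq_sum s ℂ k)
  simp only [map_mul, map_sum, map_pow, map_neg, map_one, map_natCast] at this
  push_cast
  rw [he k hk, this]
  congr 1
  apply Finset.sum_congr rfl
  intro a ha
  simp only [Finset.mem_filter] at ha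
  rw [he a.1 (by omega), hp]

def compM {R : Type*} [CommRing R] (n : ℕ) (c : ℕ → R) : Matrix (Fin n) (Fin n) R :=
  Matrix.of fun i j => if (j : ℕ) + 1 < n then (if (i : ℕ) = j + 1 then 1 else 0) else - c i

def kryl {R : Type*} [CommRing R] {n : ℕ} (h0 : 0 < n) (A : Matrix (Fin n) (Fin n) R) :
    Matrix (Fin n) (Fin n) R :=
  Matrix.of fun i j => (A ^ (j : ℕ)) i ⟨0, h0⟩

lemma mul_kryl {n : ℕ} (h0 : 0 < n) (A : Matrix (Fin n) (Fin n) ℝ) :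
    A * kryl h0 A = kryl h0 A * compM n A.charpoly.coeff := by
  ext i j
  have h1 : (A * kryl h0 A) i j = (A ^ ((j : ℕ) + 1)) i ⟨0, h0⟩ := by
    rw [pow_succ', mul_apply, mul_apply]; rfl
  rw [h1, mul_apply]
  by_cases hj : (j : ℕ) + 1 < n
  · rw [Finset.sum_eq_single ⟨(j : ℕ) + 1, hj⟩]
    · simp [kryl, compM, hj]
    · intro b _ hb
      have : (b : ℕ) ≠ j + 1 := fun h => hb (Fin.ext h)
      simp [compM, hj, this]
    · simp
  · have hjn : (j : ℕ) + 1 = n := by omega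
    have hch := aeval_self_charpoly A
    rw [Polynomial.aeval_eq_sum_range, charpoly_natDegree_eq_dim, Fintype.card_fin,
      Finset.sum_range_succ] at hch
    have hl : A.charpoly.coeff n = 1 := by
      have := A.charpoly_monic
      rwa [Polynomial.Monic, Polynomial.leadingCoeff, charpoly_natDegree_eq_dim,
        Fintype.card_fin] at this
    have h2 := congrFun (congrFun hch i) ⟨0, h0⟩
    rw [hl, one_smul, Matrix.add_apply, Matrix.sum_apply, Finset.sum_range, Matrix.zero_apply] at h2
    rw [hjn, eq_neg_of_add_eq_zero_right h2, ← Finset.sum_neg_distrib]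
    apply Finset.sum_congr rfl
    intro l _
    simp [kryl, compM, hjn, mul_comm]

def shiftM (n : ℕ) : Matrix (Fin n) (Fin n) ℝ :=
  Matrix.of fun i j => if (i : ℕ) = j + 1 then 1 else 0

lemma trace_shiftM (n : ℕ) : (shiftM n).trace = 0 := by
  simp [shiftM, Matrix.trace]

lemma kryl_shiftM {n : ℕ} (h0 : 0 < n) : kryl h0 (shiftM n) = 1 := by
  have : ∀ k : ℕ, k < n → ∀ i : Fin n,
      (shiftM n ^ k) i ⟨0, h0⟩ = if (i : ℕ) = k then 1 else 0 := by
    intro k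
    induction k with
    | zero => intro _ i; simp [Matrix.one_apply, Fin.ext_iff]
    | succ k ih =>
      intro hk i
      rw [pow_succ', mul_apply, Finset.sum_eq_single ⟨k, by omega⟩]
      · rw [ih (by omega)]; simp [shiftM]
      · intro b _ hb
        have : (b : ℕ) ≠ k := fun h => hb (Fin.ext h)
        rw [ih (by omega)]; simp [this]
      · simp
  ext i j
  rw [kryl, Matrix.of_apply, this j j.2, Matrix.one_apply]
  simp [Fin.ext_iff]

lemma conj_pos {n : ℕ} (h0 : 0 < n) (P : Matrix (Fin n) (Fin n) ℝ → ℝ)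
    (hinv : ∀ g A : Matrix (Fin n) (Fin n) ℝ, g.det = 1 → A.trace = 0 →
      P (g * A * g⁻¹) = P A) (A : Matrix (Fin n) (Fin n) ℝ) (hA : A.trace = 0)
    (hd : 0 < (kryl h0 A).det) : P A = P (compM n A.charpoly.coeff) := by
  set K := kryl h0 A with hK
  set d := K.det with hdd
  obtain ⟨c, hc, hcn⟩ : ∃ c : ℝ, 0 < c ∧ c ^ n = d :=
    ⟨d ^ ((n : ℝ)⁻¹), Real.rpow_pos_of_pos hd _, Real.rpow_inv_natCast_pow hd.le (by omega)⟩
  have hh : (c⁻¹ • K).det = 1 := by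
    rw [det_smul, Fintype.card_fin, inv_pow, hcn, ← hdd]
    exact inv_mul_cancel₀ hd.ne'
  have hu : IsUnit (c⁻¹ • K).det := by rw [hh]; exact isUnit_one
  have hg : ((c⁻¹ • K)⁻¹).det = 1 := by rw [det_nonsing_inv, hh]; simp
  rw [← hinv _ A hg hA, nonsing_inv_nonsing_inv _ hu, mul_assoc, mul_smul_comm, hK, mul_kryl,
    ← smul_mul_assoc, ← hK, ← mul_assoc, nonsing_inv_mul _ hu, one_mul]

lemma eq_comp {n : ℕ} (h0 : 0 < n) (Q : MvPolynomial (Fin n × Fin n) ℝ)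
    (hinv : ∀ A : Matrix (Fin n) (Fin n) ℝ, A.trace = 0 → 0 < (kryl h0 A).det →
      eval (fun ij => A ij.1 ij.2) Q = eval (fun ij => compM n A.charpoly.coeff ij.1 ij.2) Q)
    (A : Matrix (Fin n) (Fin n) ℝ) (hA : A.trace = 0) :
    eval (fun ij => A ij.1 ij.2) Q = eval (fun ij => compM n A.charpoly.coeff ij.1 ij.2) Q := by
  set M : Matrix (Fin n) (Fin n) (Polynomial ℝ) :=
    A.map Polynomial.C + (Polynomial.X : Polynomial ℝ) • (shiftM n - A).map Polynomial.C with hM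
  have hMt : ∀ t : ℝ, M.map (Polynomial.aeval t) = A + t • (shiftM n - A) := by
    intro t
    ext i j
    simp [hM]
  set p : Polynomial ℝ := aeval (fun ij : Fin n × Fin n => M ij.1 ij.2) Q
    - aeval (fun ij : Fin n × Fin n => compM n M.charpoly.coeff ij.1 ij.2) Q with hp
  have hpt : ∀ t : ℝ, Polynomial.aeval t p =
      eval (fun ij => (A + t • (shiftM n - A)) ij.1 ij.2) Q -
      eval (fun ij => compM n (A + t • (shiftM n - A)).charpoly.coeff ij.1 ij.2) Q := by
    intro t
    rw [← hMt, hp, map_sub, ← AlgHom.comp_apply, ← AlgHom.comp_apply, comp_aeval, comp_aeval,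
      ← MvPolynomial.coe_aeval_eq_eval, ← MvPolynomial.coe_aeval_eq_eval]
    have hch : (M.map (Polynomial.aeval t)).charpoly
        = M.charpoly.map (Polynomial.aeval t : Polynomial ℝ →ₐ[ℝ] ℝ).toRingHom :=
      charpoly_map M (Polynomial.aeval t : Polynomial ℝ →ₐ[ℝ] ℝ).toRingHom
    have h2 : ∀ ij : Fin n × Fin n, Polynomial.aeval t (compM n M.charpoly.coeff ij.1 ij.2)
        = compM n (M.map (Polynomial.aeval t)).charpoly.coeff ij.1 ij.2 := by
      intro ij
      rw [hch]
      simp only [compM, Matrix.of_apply]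
      split_ifs <;> simp [Polynomial.coeff_map]
    simp only [h2]
    rfl
  have hD : ∀ t : ℝ, (kryl h0 (A + t • (shiftM n - A))).det
      = Polynomial.eval t (kryl h0 M).det := by
    intro t
    rw [← hMt, ← Polynomial.coe_aeval_eq_eval]
    have : kryl h0 (M.map (Polynomial.aeval t))
      = (Polynomial.aeval t : Polynomial ℝ →ₐ[ℝ] ℝ).mapMatrix (kryl h0 M) := by
      ext i j
      have := map_pow (Polynomial.aeval t : Polynomial ℝ →ₐ[ℝ] ℝ).mapMatrix M (j : ℕ)
      exact (congrFun (congrFun this i) ⟨0, h0⟩).symm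
    rw [this]
    exact (AlgHom.map_det _ _).symm
  have hopen : IsOpen {t : ℝ | 0 < Polynomial.eval t (kryl h0 M).det} :=
    isOpen_lt continuous_const (Polynomial.continuous _)
  have hinf : {t : ℝ | 0 < Polynomial.eval t (kryl h0 M).det}.Infinite := by
    apply infinite_of_mem_nhds (1 : ℝ)
    apply hopen.mem_nhds
    simp only [Set.mem_ofPred_eq]
    rw [← hD]
    simp [kryl_shiftM]
  have hp0 : p = 0 := by
    apply Polynomial.eq_zero_of_infinite_isRoot
    apply hinf.mono
    intro t ht
    simp only [Set.mem_ofPred_eq] at ht ⊢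
    rw [← hD] at ht
    have := hpt t
    rw [Polynomial.IsRoot, ← Polynomial.coe_aeval_eq_eval]
    rw [hinv _ (by simp [hA, trace_shiftM]) ht, sub_self] at this
    exact this
  have := hpt 0
  rw [hp0] at this
  simp only [map_zero, zero_smul, add_zero] at this
  exact sub_eq_zero.1 this.symm

/-- The generation part of Theorem 6.1: a polynomial function `P` on `n × n` real
matrices which is invariant under conjugation by matrices of determinant `1` on the
trace-zero matrices is, on trace-zero matrices, a polynomial in
`tr(A²), tr(A³), …, tr(Aⁿ)`. -/
theorem SLn_invariants_generated_by_traces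
    (n : ℕ) (hn : 2 ≤ n) (P : Matrix (Fin n) (Fin n) ℝ → ℝ)
    (hpoly : ∃ Q : MvPolynomial (Fin n × Fin n) ℝ,
      ∀ A : Matrix (Fin n) (Fin n) ℝ, P A = eval (fun ij => A ij.1 ij.2) Q)
    (hinv : ∀ g A : Matrix (Fin n) (Fin n) ℝ, g.det = 1 → A.trace = 0 →
      P (g * A * g⁻¹) = P A) :
    ∃ F : MvPolynomial {i : ℕ // 2 ≤ i ∧ i ≤ n} ℝ,
      ∀ A : Matrix (Fin n) (Fin n) ℝ, A.trace = 0 →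
        P A = eval (fun i : {i : ℕ // 2 ≤ i ∧ i ≤ n} => (A ^ (i : ℕ)).trace) F := by
  obtain ⟨Q, hQ⟩ := hpoly
  have h0 : 0 < n := by omega
  have hPc : ∀ A : Matrix (Fin n) (Fin n) ℝ, A.trace = 0 →
      P A = eval (fun ij => compM n A.charpoly.coeff ij.1 ij.2) Q := by
    intro A hA
    rw [hQ]
    refine eq_comp h0 Q (fun A hA hd => ?_) A hA
    rw [← hQ, conj_pos h0 P hinv A hA hd, hQ]
  let T := {A : Matrix (Fin n) (Fin n) ℝ // A.trace = 0}
  let τ : {i : ℕ // 2 ≤ i ∧ i ≤ n} → T → ℝ := fun i A => (A.1 ^ (i : ℕ)).trace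
  let S : Subalgebra ℝ (T → ℝ) := (aeval (R := ℝ) τ).range
  have htr : ∀ j, 1 ≤ j → j ≤ n → (fun A : T => (A.1 ^ j).trace) ∈ S := by
    intro j h1 h2
    by_cases hj : j = 1
    · have : (fun A : T => (A.1 ^ j).trace) = 0 := by
        funext A
        simp [hj, A.2]
      rw [this]
      exact S.zero_mem
    · exact ⟨X ⟨j, by omega, h2⟩, by simp [τ]⟩
  have hee : ∀ k, k ≤ n → (fun A : T => ee A.1 k) ∈ S := by
    intro k
    induction k using Nat.strong_induction_on with
    | _ k ih =>
      intro hk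
      by_cases hk0 : k = 0
      · have : (fun A : T => ee A.1 k) = 1 := by
          funext A
          have := A.1.charpoly_monic
          rw [Polynomial.Monic, Polynomial.leadingCoeff, charpoly_natDegree_eq_dim,
            Fintype.card_fin] at this
          simp [hk0, ee, this]
        rw [this]
        exact S.one_mem
      · have : (fun A : T => ee A.1 k) = ((k : ℝ)⁻¹ * (-1) ^ (k + 1)) •
            ∑ a ∈ Finset.HasAntidiagonal.antidiagonal k with a.1 < k, ((-1 : ℝ) ^ a.1) •
              ((fun A : T => ee A.1 a.1) * (fun A : T => (A.1 ^ a.2).trace)) := by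
          funext A
          have hne : (k : ℝ) ≠ 0 := by exact_mod_cast hk0
          have h := newton_trace A.1 k hk
          simp only [Pi.smul_apply, Finset.sum_apply, Pi.mul_apply, smul_eq_mul]
          rw [mul_assoc, eq_inv_mul_iff_mul_eq₀ hne, h]
          simp only [mul_assoc]
        rw [this]
        refine S.smul_mem (S.sum_mem fun a ha => S.smul_mem (S.mul_mem ?_ ?_) _) _
        all_goals
          rw [Finset.mem_filter, Finset.HasAntidiagonal.mem_antidiagonal] at ha
        · exact ih _ ha.2 (by omega)
        · exact htr _ (by omega) (by omega)
  have hc : ∀ ij : Fin n × Fin n, (fun A : T => compM n A.1.charpoly.coeff ij.1 ij.2) ∈ S := by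
    intro ij
    simp only [compM, Matrix.of_apply]
    split_ifs
    · exact S.one_mem
    · exact S.zero_mem
    · have : (fun A : T => - A.1.charpoly.coeff ij.1)
          = (-(-1 : ℝ) ^ (n - (ij.1 : ℕ))) • (fun A : T => ee A.1 (n - ij.1)) := by
        funext A
        have h3 : n - (n - (ij.1 : ℕ)) = ij.1 := by omega
        simp only [ee, h3, Pi.smul_apply, smul_eq_mul]
        rw [neg_mul, ← mul_assoc, ← mul_pow]; simp
      rw [this]
      exact S.smul_mem (hee _ (by omega)) _
  have hfin : (aeval (R := ℝ) (fun (ij : Fin n × Fin n) (A : T) =>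
      compM n A.1.charpoly.coeff ij.1 ij.2) Q) ∈ S := by
    have := Subalgebra.mvPolynomial_aeval_coe S (fun ij : Fin n × Fin n => ⟨_, hc ij⟩) Q
    exact this ▸ Subtype.property _
  obtain ⟨F, hF⟩ := hfin
  refine ⟨F, fun A hA => ?_⟩
  have h := congrFun hF ⟨A, hA⟩
  have hev : ∀ {σ : Type} (f : σ → T → ℝ) (q : MvPolynomial σ ℝ) (a : T),
      (aeval (R := ℝ) f q) a = eval (fun i => f i a) q := by
    intro σ f q a
    rw [← MvPolynomial.coe_aeval_eq_eval]
    have := comp_aeval f (Pi.evalAlgHom ℝ (fun _ : T => ℝ) a)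
    exact DFunLike.congr_fun this q
  rw [hPc A hA]
  have h' : (aeval (R := ℝ) τ F) ⟨A, hA⟩ = _ := h
  rw [hev, hev] at h'
  exact h'.symm
end
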